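/- arXiv:1209.3397 — 2 statements merged into one kernel-verified Lean document; each statement's English description precedes it below -/
import Mathlib

section
/- Normal form for the approximate (frozen) system: define, for φ ∈ ℝ and τ ≠ τ_*, S^a₁(φ,τ) := −H̃₁^{(1)}(I_*,φ,τ_*)/Ω(τ), S^a₂(φ,τ) := −ω'_*·H̃₁^{(2)}(I_*,φ,τ_*)/Ω(τ)³, S^a₃(φ,τ) := −3·ω'_*²·H̃₁^{(3)}(I_*,φ,τ_*)/Ω(τ)⁵, S^a₄(φ,τ) := −15·ω'_*³·H̃₁^{(4)}(I_*,φ,τ_*)/Ω(τ)⁷. Then each S^a_j is 2π-periodic in φ with ⟨S^a_j⟩^φ = 0, and they satisfy Ω(τ)·∂S^a₁/∂φ + H̃₁(I_*,φ,τ_*) = 0 and Ω(τ)·∂S^a_{j+1}/∂φ + ∂S^a_j/∂τ = 0 for j = 1, 2, 3. Consequently, with J_a(t) := I_a(t) − ε·(∂S^a₁/∂φ + ε·∂S^a₂/∂φ + ε²·∂S^a₃/∂φ + ε³·∂S^a₄/∂φ)(φ_a(εt), εt), along any solution of the approximate system with εt ≠ τ_* one has exactly dJ_a/dt = −ε⁵·∂²S^a₄/∂τ∂φ(φ_a(εt),εt)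 = −105·ε⁵·ω'_*⁴·H̃₁^{(3)}(I_*, φ_a(εt), τ_*)/Ω(εt)⁸. -/
open Real MeasureTheory Set Filter Topology

noncomputable section

/-- Partial derivative in the first (action) variable. -/
def pdI (f : ℝ → ℝ → ℝ → ℝ) (x y z : ℝ) : ℝ := deriv (fun x' => f x' y z) x

/-- Partial derivative in the second (angle) variable. -/
def pdPhi (f : ℝ → ℝ → ℝ → ℝ) (x y z : ℝ) : ℝ := deriv (fun y' => f x y' z) y

/-- Partial derivative in the third (slow time) variable. -/
def pdTau (f : ℝ → ℝ → ℝ → ℝ) (x y z : ℝ) : ℝ := deriv (fun z' => f x y z') z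

/-- n-th partial derivative in the first variable. -/
def pdIn (n : ℕ) (f : ℝ → ℝ → ℝ → ℝ) (x y z : ℝ) : ℝ :=
  iteratedDeriv n (fun x' => f x' y z) x

/-- Average over the angle. -/
def avgPhi (f : ℝ → ℝ → ℝ → ℝ) (x z : ℝ) : ℝ :=
  (1/(2*π)) * ∫ y in (0:ℝ)..(2*π), f x y z

/-- Oscillating part  H̃ = H − ⟨H⟩^φ. -/
def tilde (f : ℝ → ℝ → ℝ → ℝ) (x y z : ℝ) : ℝ := f x y z - avgPhi f x z

/-- Derivative in the first variable of a function of (I, τ). -/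
def dI1 (g : ℝ → ℝ → ℝ) (x z : ℝ) : ℝ := deriv (fun x' => g x' z) x

/-- n-th derivative in the first variable of a function of (I, τ). -/
def dIn (n : ℕ) (g : ℝ → ℝ → ℝ) (x z : ℝ) : ℝ := iteratedDeriv n (fun x' => g x' z) x

/-- ⟨H̃₁²⟩^φ as a function of (I, τ). -/
def sqAvg (H₁ : ℝ → ℝ → ℝ → ℝ) (x z : ℝ) : ℝ :=
  avgPhi (fun a b c => (tilde H₁ a b c)^2) x z

/-- u₁ = H̃₁/ω. -/
def u1 (H₁ : ℝ → ℝ → ℝ → ℝ) (ω : ℝ → ℝ) (x y z : ℝ) : ℝ := tilde H₁ x y z / ω z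

/-- v₁ = −∫₀^φ ∂u₁/∂I dψ + ⟨∫₀^φ ∂u₁/∂I dψ⟩^φ. -/
def v1 (H₁ : ℝ → ℝ → ℝ → ℝ) (ω : ℝ → ℝ) (x y z : ℝ) : ℝ :=
  -(∫ ψ in (0:ℝ)..y, pdI (u1 H₁ ω) x ψ z)
  + avgPhi (fun a b c => ∫ ψ in (0:ℝ)..b, pdI (u1 H₁ ω) a ψ c) x z

/-- 𝓡₂(J,τ) = −(1/(2ω)) ∂²⟨H̃₁²⟩^φ/∂I². -/
def R2fun (H₁ : ℝ → ℝ → ℝ → ℝ) (ω : ℝ → ℝ) (x z : ℝ) : ℝ :=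
  -(1/(2 * ω z)) * dIn 2 (sqAvg H₁) x z

/-- The hat operator: zero-mean angular antiderivative. -/
def hat (g : ℝ → ℝ → ℝ → ℝ) (x y z : ℝ) : ℝ :=
  (∫ ψ in (0:ℝ)..y, g x ψ z)
  - avgPhi (fun a b c => ∫ ψ in (0:ℝ)..b, g a ψ c) x z

/-- k-fold application of the hat operator. -/
def hatIter (g : ℝ → ℝ → ℝ → ℝ) : ℕ → ℝ → ℝ → ℝ → ℝ
  | 0 => g
  | n+1 => hat (hatIter g n)

/-- Partial derivative in the first variable of a function of (φ, τ). -/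
def pdy (g : ℝ → ℝ → ℝ) (y z : ℝ) : ℝ := deriv (fun y' => g y' z) y

/-- Partial derivative in the second variable of a function of (φ, τ). -/
def pdz (g : ℝ → ℝ → ℝ) (y z : ℝ) : ℝ := deriv (fun z' => g y z') z

/-- Normal form data: periodicity/zero mean of S₁,…,S₄ and the homological equations. -/
def HomEqs (DI Dτ : Set ℝ) (τs : ℝ) (ω : ℝ → ℝ)
    (H₁ S₁ S₂ S₃ S₄ : ℝ → ℝ → ℝ → ℝ) (R₂ R₃ R₄ : ℝ → ℝ → ℝ) : Prop :=
  (∀ x ∈ DI, ∀ z ∈ Dτ, z ≠ τs →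
      (Function.Periodic (fun y => S₁ x y z) (2*π) ∧ avgPhi S₁ x z = 0) ∧
      (Function.Periodic (fun y => S₂ x y z) (2*π) ∧ avgPhi S₂ x z = 0) ∧
      (Function.Periodic (fun y => S₃ x y z) (2*π) ∧ avgPhi S₃ x z = 0) ∧
      (Function.Periodic (fun y => S₄ x y z) (2*π) ∧ avgPhi S₄ x z = 0)) ∧
  (∀ x ∈ DI, ∀ y : ℝ, ∀ z ∈ Dτ, z ≠ τs →
      ω z * pdPhi S₁ x y z + tilde H₁ x y z = 0 ∧
      ω z * pdPhi S₂ x y z + pdI H₁ x y z * pdPhi S₁ x y z + pdTau S₁ x y z = R₂ x z ∧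
      ω z * pdPhi S₃ x y z + (1/2) * pdIn 2 H₁ x y z * (pdPhi S₁ x y z)^2
        + pdI H₁ x y z * pdPhi S₂ x y z + pdTau S₂ x y z = R₃ x z ∧
      ω z * pdPhi S₄ x y z + (1/6) * pdIn 3 H₁ x y z * (pdPhi S₁ x y z)^3
        + pdIn 2 H₁ x y z * pdPhi S₁ x y z * pdPhi S₂ x y z
        + pdI H₁ x y z * pdPhi S₃ x y z + pdTau S₃ x y z = R₄ x z) ∧
  (∀ x ∈ DI, ∀ z ∈ Dτ, z ≠ τs →
      R₂ x z = avgPhi (fun a b c => pdI H₁ a b c * pdPhi S₁ a b c) x z ∧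
      R₃ x z = avgPhi (fun a b c => (1/2) * pdIn 2 H₁ a b c * (pdPhi S₁ a b c)^2
        + pdI H₁ a b c * pdPhi S₂ a b c) x z ∧
      R₄ x z = avgPhi (fun a b c => (1/6) * pdIn 3 H₁ a b c * (pdPhi S₁ a b c)^3
        + pdIn 2 H₁ a b c * pdPhi S₁ a b c * pdPhi S₂ a b c
        + pdI H₁ a b c * pdPhi S₃ a b c) x z)

/-- The full generating function S = S₁ + ε S₂ + ε² S₃ + ε³ S₄. -/
def Stot (S₁ S₂ S₃ S₄ : ℝ → ℝ → ℝ → ℝ) (ε : ℝ) (x y z : ℝ) : ℝ :=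
  S₁ x y z + ε * S₂ x y z + ε^2 * S₃ x y z + ε^3 * S₄ x y z

/-- Linearized frequency Ω(τ) = ω'_*·(τ − τ_*). -/
def Omeg (ω : ℝ → ℝ) (τs z : ℝ) : ℝ := deriv ω τs * (z - τs)

def Sa1 (H₁ : ℝ → ℝ → ℝ → ℝ) (ω : ℝ → ℝ) (τs Istar : ℝ) (y z : ℝ) : ℝ :=
  -(hatIter (tilde H₁) 1 Istar y τs) / Omeg ω τs z

def Sa2 (H₁ : ℝ → ℝ → ℝ → ℝ) (ω : ℝ → ℝ) (τs Istar : ℝ) (y z : ℝ) : ℝ :=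
  -(deriv ω τs * hatIter (tilde H₁) 2 Istar y τs) / (Omeg ω τs z)^3

def Sa3 (H₁ : ℝ → ℝ → ℝ → ℝ) (ω : ℝ → ℝ) (τs Istar : ℝ) (y z : ℝ) : ℝ :=
  -(3 * (deriv ω τs)^2 * hatIter (tilde H₁) 3 Istar y τs) / (Omeg ω τs z)^5

def Sa4 (H₁ : ℝ → ℝ → ℝ → ℝ) (ω : ℝ → ℝ) (τs Istar : ℝ) (y z : ℝ) : ℝ :=
  -(15 * (deriv ω τs)^3 * hatIter (tilde H₁) 4 Istar y τs) / (Omeg ω τs z)^7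

lemma hat_step (g : ℝ → ℝ → ℝ → ℝ) (x z : ℝ) (hc : Continuous (fun y => g x y z))
    (hp : Function.Periodic (fun y => g x y z) (2*π))
    (h0 : ∫ y in (0:ℝ)..(2*π), g x y z = 0) :
    (∀ y, HasDerivAt (fun y => hat g x y z) (g x y z) y) ∧
    Continuous (fun y => hat g x y z) ∧
    Function.Periodic (fun y => hat g x y z) (2*π) ∧
    ∫ y in (0:ℝ)..(2*π), hat g x y z = 0 := by
  have hd : ∀ y, HasDerivAt (fun y => hat g x y z) (g x y z) y := by
    intro y
    have := (hc.integral_hasStrictDerivAt 0 y).hasDerivAt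
    exact this.sub_const _
  have hcont : Continuous (fun y => ∫ ψ in (0:ℝ)..y, g x ψ z) :=
    continuous_iff_continuousAt.2 fun y =>
      (hc.integral_hasStrictDerivAt 0 y).hasDerivAt.continuousAt
  refine ⟨hd, continuous_iff_continuousAt.2 fun y => (hd y).continuousAt, ?_, ?_⟩
  · intro y
    have h1 : ∫ ψ in y..(y+2*π), g x ψ z = 0 := by
      have := hp.intervalIntegral_add_eq y 0
      simp only [zero_add] at this
      rw [this, h0]
    have h2 := intervalIntegral.integral_add_adjacent_intervals
      (hc.intervalIntegrable (μ := volume) 0 y) (hc.intervalIntegrable (μ := volume) y (y+2*π))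
    simp only [hat]
    rw [← h2, h1, add_zero]
  · simp only [hat]
    rw [intervalIntegral.integral_sub (hcont.intervalIntegrable _ _) (by simp)]
    simp only [avgPhi, intervalIntegral.integral_const, smul_eq_mul]
    have := Real.pi_ne_zero
    field_simp
    ring

lemma inv_pow_deriv (c τs z k : ℝ) (n : ℕ) (hc : c ≠ 0) (hz : z ≠ τs) :
    HasDerivAt (fun z => k / (c * (z - τs))^n) (-(n * k * c) / (c * (z - τs))^(n+1)) z := by
  have hne : c * (z - τs) ≠ 0 := mul_ne_zero hc (sub_ne_zero.2 hz)
  have h1 : HasDerivAt (fun z => c * (z - τs)) c z := by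
    simpa using ((hasDerivAt_id z).sub_const τs).const_mul c
  have h2 := (hasDerivAt_const z k).fun_div (h1.fun_pow n) (pow_ne_zero n hne)
  refine h2.congr_deriv ?_
  rcases n with _ | n
  · simp
  · simp only [Nat.add_sub_cancel]
    field_simp
    ring

/-- Normal form for the approximate (frozen) system. -/
theorem approx_normal_form
    (DI Dτ : Set ℝ) (hDIo : IsOpen DI) (hDIc : DI.OrdConnected)
    (hDτo : IsOpen Dτ) (hDτc : Dτ.OrdConnected)
    (ω : ℝ → ℝ) (H₁ : ℝ → ℝ → ℝ → ℝ)
    (hω : ContDiffOn ℝ 4 ω Dτ)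
    (hH₁ : ContDiffOn ℝ 4 (fun p : ℝ × ℝ × ℝ => H₁ p.1 p.2.1 p.2.2)
      (DI ×ˢ (univ : Set ℝ) ×ˢ Dτ))
    (hper : ∀ x z, Function.Periodic (fun y => H₁ x y z) (2*π))
    (τs : ℝ) (hτs : τs ∈ Dτ) (hωz : ω τs = 0) (hω' : 0 < deriv ω τs)
    (hωne : ∀ τ ∈ Dτ, τ ≠ τs → ω τ ≠ 0)
    (Istar : ℝ) (hIstar : Istar ∈ DI) (φstar : ℝ) :
    (∀ z : ℝ, z ≠ τs →
        (Function.Periodic (fun y => Sa1 H₁ ω τs Istar y z) (2*π) ∧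
          (1/(2*π)) * (∫ y in (0:ℝ)..(2*π), Sa1 H₁ ω τs Istar y z) = 0) ∧
        (Function.Periodic (fun y => Sa2 H₁ ω τs Istar y z) (2*π) ∧
          (1/(2*π)) * (∫ y in (0:ℝ)..(2*π), Sa2 H₁ ω τs Istar y z) = 0) ∧
        (Function.Periodic (fun y => Sa3 H₁ ω τs Istar y z) (2*π) ∧
          (1/(2*π)) * (∫ y in (0:ℝ)..(2*π), Sa3 H₁ ω τs Istar y z) = 0) ∧
        (Function.Periodic (fun y => Sa4 H₁ ω τs Istar y z) (2*π) ∧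
          (1/(2*π)) * (∫ y in (0:ℝ)..(2*π), Sa4 H₁ ω τs Istar y z) = 0)) ∧
    (∀ y z : ℝ, z ≠ τs →
        Omeg ω τs z * pdy (Sa1 H₁ ω τs Istar) y z + tilde H₁ Istar y τs = 0 ∧
        Omeg ω τs z * pdy (Sa2 H₁ ω τs Istar) y z + pdz (Sa1 H₁ ω τs Istar) y z = 0 ∧
        Omeg ω τs z * pdy (Sa3 H₁ ω τs Istar) y z + pdz (Sa2 H₁ ω τs Istar) y z = 0 ∧
        Omeg ω τs z * pdy (Sa4 H₁ ω τs Istar) y z + pdz (Sa3 H₁ ω τs Istar) y z = 0) ∧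
    (∀ ε : ℝ, 0 < ε → ∀ Ia : ℝ → ℝ,
        (∀ s : ℝ, HasDerivAt Ia
          (-(ε * pdPhi H₁ Istar (φstar + deriv ω τs * (ε*s - τs)^2/(2*ε)) τs)) s) →
        ∀ t : ℝ, ε*t ≠ τs →
          HasDerivAt (fun s : ℝ => Ia s
              - ε * (pdy (Sa1 H₁ ω τs Istar)
                        (φstar + deriv ω τs * (ε*s - τs)^2/(2*ε)) (ε*s)
                + ε * pdy (Sa2 H₁ ω τs Istar)
                        (φstar + deriv ω τs * (ε*s - τs)^2/(2*ε)) (ε*s)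
                + ε^2 * pdy (Sa3 H₁ ω τs Istar)
                        (φstar + deriv ω τs * (ε*s - τs)^2/(2*ε)) (ε*s)
                + ε^3 * pdy (Sa4 H₁ ω τs Istar)
                        (φstar + deriv ω τs * (ε*s - τs)^2/(2*ε)) (ε*s)))
            (-(ε^5 * pdz (pdy (Sa4 H₁ ω τs Istar))
                (φstar + deriv ω τs * (ε*t - τs)^2/(2*ε)) (ε*t))) t ∧
          -(ε^5 * pdz (pdy (Sa4 H₁ ω τs Istar))
              (φstar + deriv ω τs * (ε*t - τs)^2/(2*ε)) (ε*t))
            = -(105 * ε^5 * (deriv ω τs)^4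
                * hatIter (tilde H₁) 3 Istar
                    (φstar + deriv ω τs * (ε*t - τs)^2/(2*ε)) τs
                / (Omeg ω τs (ε*t))^8)) := by
  have hcd : ContDiff ℝ 4 (fun y => H₁ Istar y τs) := by
    have : ContDiff ℝ 4 (fun y : ℝ => ((Istar, y, τs) : ℝ × ℝ × ℝ)) := by fun_prop
    have h := hH₁.comp this.contDiffOn (s := univ) (fun y _ => ⟨hIstar, mem_univ _, hτs⟩)
    exact contDiffOn_univ.1 h
  have hHd : ∀ y, HasDerivAt (fun y => H₁ Istar y τs) (pdPhi H₁ Istar y τs) y := fun y =>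
    (hcd.differentiable (by norm_num) y).hasDerivAt
  have htd : ∀ y, HasDerivAt (fun y => tilde H₁ Istar y τs) (pdPhi H₁ Istar y τs) y := fun y =>
    (hHd y).sub_const _
  have htc : Continuous (fun y => tilde H₁ Istar y τs) := hcd.continuous.sub continuous_const
  have htp : Function.Periodic (fun y => tilde H₁ Istar y τs) (2*π) := by
    intro y
    have := hper Istar τs y
    simp only at this
    simp only [tilde, this]
  have ht0 : ∫ y in (0:ℝ)..(2*π), tilde H₁ Istar y τs = 0 := by
    simp only [tilde]
    rw [intervalIntegral.integral_sub (hcd.continuous.intervalIntegrable _ _) (by simp)]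
    simp only [avgPhi, intervalIntegral.integral_const, smul_eq_mul]
    have := Real.pi_ne_zero
    field_simp
    ring
  obtain ⟨d1, c1, p1, m1⟩ := hat_step (hatIter (tilde H₁) 0) Istar τs htc htp ht0
  obtain ⟨d2, c2, p2, m2⟩ := hat_step (hatIter (tilde H₁) 1) Istar τs c1 p1 m1
  obtain ⟨d3, c3, p3, m3⟩ := hat_step (hatIter (tilde H₁) 2) Istar τs c2 p2 m2
  obtain ⟨d4, c4, p4, m4⟩ := hat_step (hatIter (tilde H₁) 3) Istar τs c3 p3 m3
  change ∀ y, HasDerivAt (fun y => hatIter (tilde H₁) 1 Istar y τs) (tilde H₁ Istar y τs) y at d1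
  change ∀ y, HasDerivAt (fun y => hatIter (tilde H₁) 2 Istar y τs) _ y at d2
  change ∀ y, HasDerivAt (fun y => hatIter (tilde H₁) 3 Istar y τs) _ y at d3
  change ∀ y, HasDerivAt (fun y => hatIter (tilde H₁) 4 Istar y τs) _ y at d4
  change Function.Periodic (fun y => hatIter (tilde H₁) 1 Istar y τs) _ at p1
  change Function.Periodic (fun y => hatIter (tilde H₁) 2 Istar y τs) _ at p2
  change Function.Periodic (fun y => hatIter (tilde H₁) 3 Istar y τs) _ at p3
  change Function.Periodic (fun y => hatIter (tilde H₁) 4 Istar y τs) _ at p4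
  change ∫ y in (0:ℝ)..(2*π), hatIter (tilde H₁) 1 Istar y τs = 0 at m1
  change ∫ y in (0:ℝ)..(2*π), hatIter (tilde H₁) 2 Istar y τs = 0 at m2
  change ∫ y in (0:ℝ)..(2*π), hatIter (tilde H₁) 3 Istar y τs = 0 at m3
  change ∫ y in (0:ℝ)..(2*π), hatIter (tilde H₁) 4 Istar y τs = 0 at m4
  have hw : deriv ω τs ≠ 0 := hω'.ne'
  have e1 : pdy (Sa1 H₁ ω τs Istar) = fun y z =>
      -(tilde H₁ Istar y τs) / (deriv ω τs * (z - τs))^1 := by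
    funext y z
    rw [pow_one]
    exact ((d1 y).fun_neg.div_const _).deriv
  have e2 : pdy (Sa2 H₁ ω τs Istar) = fun y z =>
      -(deriv ω τs * hatIter (tilde H₁) 1 Istar y τs) / (deriv ω τs * (z - τs))^3 := by
    funext y z
    exact (((d2 y).const_mul _).fun_neg.div_const _).deriv
  have e3 : pdy (Sa3 H₁ ω τs Istar) = fun y z =>
      -(3 * (deriv ω τs)^2 * hatIter (tilde H₁) 2 Istar y τs) / (deriv ω τs * (z - τs))^5 := by
    funext y z
    exact (((d3 y).const_mul _).fun_neg.div_const _).deriv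
  have e4 : pdy (Sa4 H₁ ω τs Istar) = fun y z =>
      -(15 * (deriv ω τs)^3 * hatIter (tilde H₁) 3 Istar y τs) / (deriv ω τs * (z - τs))^7 := by
    funext y z
    exact (((d4 y).const_mul _).fun_neg.div_const _).deriv
  have hdiv : ∀ (f : ℝ → ℝ) (a b : ℝ), Function.Periodic f (2*π) →
      (∫ y in (0:ℝ)..(2*π), f y = 0) →
      Function.Periodic (fun y => -(a * f y) / b) (2*π) ∧
      (1/(2*π)) * (∫ y in (0:ℝ)..(2*π), -(a * f y) / b) = 0 := by
    intro f a b hp hm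
    refine ⟨fun y => by simp only [hp y], ?_⟩
    rw [intervalIntegral.integral_div, intervalIntegral.integral_neg,
      intervalIntegral.integral_const_mul, hm]
    simp
  refine ⟨fun z hz => ⟨?_, hdiv _ _ _ p2 m2, hdiv _ _ _ p3 m3, hdiv _ _ _ p4 m4⟩, ?_, ?_⟩
  · have := hdiv _ 1 (Omeg ω τs z) p1 m1
    simp only [one_mul] at this
    exact this
  · intro y z hz
    have hzz : z - τs ≠ 0 := sub_ne_zero.2 hz
    have z1 : pdz (Sa1 H₁ ω τs Istar) y z =
        -(((1:ℕ):ℝ) * -(hatIter (tilde H₁) 1 Istar y τs) * deriv ω τs)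
          / (deriv ω τs * (z - τs))^(1+1) := by
      have := inv_pow_deriv (deriv ω τs) τs z (-(hatIter (tilde H₁) 1 Istar y τs)) 1 hw hz
      refine HasDerivAt.deriv (this.congr_of_eventuallyEq (Eventually.of_forall fun s => ?_))
      simp only [Sa1, Omeg, pow_one]
    have z2 : pdz (Sa2 H₁ ω τs Istar) y z = _ :=
      (inv_pow_deriv (deriv ω τs) τs z _ 3 hw hz).deriv
    have z3 : pdz (Sa3 H₁ ω τs Istar) y z = _ :=
      (inv_pow_deriv (deriv ω τs) τs z _ 5 hw hz).deriv
    rw [z1, z2, z3, e1, e2, e3, e4]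
    simp only [Omeg]
    push_cast
    refine ⟨?_, ?_, ?_, ?_⟩ <;> (field_simp; ring)
  · intro ε hε Ia hIa t ht
    have hzz : ε * t - τs ≠ 0 := sub_ne_zero.2 ht
    have z4 : ∀ y, pdz (pdy (Sa4 H₁ ω τs Istar)) y (ε*t) =
        -(((7:ℕ):ℝ) * -(15 * (deriv ω τs)^3 * hatIter (tilde H₁) 3 Istar y τs) * deriv ω τs)
          / (deriv ω τs * (ε*t - τs))^(7+1) := by
      intro y
      rw [e4]
      exact (inv_pow_deriv (deriv ω τs) τs (ε*t) _ 7 hw ht).deriv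
    rw [z4, e1, e2, e3, e4]
    have hφ : HasDerivAt (fun s => φstar + deriv ω τs * (ε*s - τs)^2/(2*ε))
        (deriv ω τs * (ε*t - τs)) t := by
      have h1 : HasDerivAt (fun s => ε*s - τs) ε t := by
        simpa using ((hasDerivAt_id t).const_mul ε).sub_const τs
      refine ((((h1.fun_pow 2).const_mul (deriv ω τs)).div_const (2*ε)).const_add φstar).congr_deriv ?_
      field_simp
      simp [mul_comm]
    have hz : HasDerivAt (fun s => ε*s) ε t := by
      simpa using (hasDerivAt_id t).const_mul ε
    have key : ∀ (f : ℝ → ℝ) (f' a : ℝ) (n : ℕ),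
        HasDerivAt f f' (φstar + deriv ω τs * (ε*t - τs)^2/(2*ε)) →
        HasDerivAt (fun s => -(a * f (φstar + deriv ω τs * (ε*s - τs)^2/(2*ε)))
            / (deriv ω τs * (ε*s - τs))^n)
          (-(a * (f' * (deriv ω τs * (ε*t - τs)))) * (1 / (deriv ω τs * (ε*t - τs))^n)
            + -(a * f (φstar + deriv ω τs * (ε*t - τs)^2/(2*ε))) *
              (-(n * 1 * deriv ω τs) / (deriv ω τs * (ε*t - τs))^(n+1) * ε)) t := by
      intro f f' a n hf
      have h1 := ((hf.comp t hφ).const_mul a).fun_neg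
      have h2 := (inv_pow_deriv (deriv ω τs) τs (ε*t) 1 n hw ht).comp t hz
      have h3 := h1.fun_mul h2
      refine h3.congr_of_eventuallyEq (Eventually.of_forall fun s => ?_)
      simp only [Function.comp]
      ring
    have k1 := key _ _ 1 1 (htd _)
    have k2 := key _ _ (deriv ω τs) 3 (d1 _)
    have k3 := key _ _ (3 * deriv ω τs^2) 5 (d2 _)
    have k4 := key _ _ (15 * deriv ω τs^3) 7 (d3 _)
    simp only [one_mul] at k1
    refine ⟨((hIa t).fun_sub ((((k1.fun_add (k2.const_mul ε)).fun_add (k3.const_mul (ε^2))).fun_add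
      (k4.const_mul (ε^3))).const_mul ε)).congr_deriv ?_, ?_⟩
    · generalize φstar + deriv ω τs * (ε*t - τs)^2/(2*ε) = Y
      generalize pdPhi H₁ Istar Y τs = A0
      push_cast
      field_simp
      ring
    · generalize φstar + deriv ω τs * (ε*t - τs)^2/(2*ε) = Y
      simp only [Omeg]
      push_cast
      field_simp
      ring
end
end

section
/- Lemma 5 (estimate of singular integrals outside the resonance zone): let a ∈ ℝ, let c ≥ 2 be an integer, and let f₀ : D → ℝ be continuous. There exist C, ε₀ > 0 depending only on H, f₀, K, τ_-, τ_+ such that for all 0 < ε < ε₀, every solution as in the setup, and every t ∈ [t_-, t_l]: |∫_{t_l}^{t} ε^a·f₀(I(t₁), φ(t₁), εt₁)/ω(εt₁)^c dt₁| ≤ C·ε^{a − (c+1)/2}. The same estimate holds with t_l replaced by t_r and t ∈ [t_r, t_+], and with ω replaced by Ω(τ) := ω'_*·(τ − τ_*). -/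
open Real Set Filter Topology MeasureTheory

noncomputable section

lemma aux_right (b δ t B : ℝ) (c : ℤ) (hc : 2 ≤ c) (hδ : 0 < δ) (hB : 0 ≤ B) (g : ℝ → ℝ)
    (ht : b + δ ≤ t)
    (hg : ∀ s ∈ Icc (b + δ) t, |g s| ≤ B * |s - b| ^ (-c)) :
    |∫ s in (b + δ)..t, g s| ≤ B * δ ^ (1 - c) := by
  have hcR : (2:ℝ) ≤ (c:ℝ) := by exact_mod_cast hc
  have hcont : ContinuousOn (fun s : ℝ => B * (s - b) ^ (-c)) (uIcc (b + δ) t) := by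
    rw [uIcc_of_le ht]
    intro s hs
    have : s - b ≠ 0 := by have := hs.1; intro h; linarith
    exact (((continuousAt_id.sub continuousAt_const).zpow₀ (-c) (Or.inl this)).const_mul B).continuousWithinAt
  have key : ‖∫ s in (b + δ)..t, g s‖ ≤ ∫ s in (b + δ)..t, B * (s - b) ^ (-c) := by
    apply intervalIntegral.norm_integral_le_of_norm_le ht
    · refine Filter.Eventually.of_forall fun s hs => ?_
      have h := hg s ⟨hs.1.le, hs.2⟩
      have h' := hs.1
      rw [abs_of_pos (by linarith : 0 < s - b)] at h
      exact h
    · exact hcont.intervalIntegrable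
  rw [Real.norm_eq_abs] at key
  refine key.trans ?_
  rw [intervalIntegral.integral_const_mul]
  refine mul_le_mul_of_nonneg_left ?_ hB
  rw [intervalIntegral.integral_comp_sub_right (fun x => x ^ (-c)) b]
  have e1 : b + δ - b = δ := by ring
  rw [e1, integral_zpow]
  · have e2 : -c + 1 = 1 - c := by ring
    rw [e2]
    have p1 : 0 < δ ^ (1 - c) := zpow_pos hδ _
    have p2 : 0 < (t - b) ^ (1 - c) := zpow_pos (by linarith) _
    push_cast
    rw [div_le_iff_of_neg (by linarith)]
    nlinarith
  · right
    refine ⟨by omega, ?_⟩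
    rw [uIcc_of_le (by linarith)]
    intro h
    exact absurd h.1 (by linarith)

lemma aux_left (b δ t B : ℝ) (c : ℤ) (hc : 2 ≤ c) (hδ : 0 < δ) (hB : 0 ≤ B) (g : ℝ → ℝ)
    (ht : t ≤ b - δ)
    (hg : ∀ s ∈ Icc t (b - δ), |g s| ≤ B * |s - b| ^ (-c)) :
    |∫ s in (b - δ)..t, g s| ≤ B * δ ^ (1 - c) := by
  have h := aux_right (-b) δ (-t) B c hc hδ hB (fun s => g (-s)) (by linarith) (by
    intro s hs
    have h := hg (-s) ⟨by linarith [hs.2], by linarith [hs.1]⟩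
    rwa [show -s - b = -(s - -b) by ring, abs_neg] at h)
  rw [intervalIntegral.integral_comp_neg, intervalIntegral.integral_symm, abs_neg] at h
  convert h using 4
  all_goals ring

lemma aux_pt (ε a M m f W b s : ℝ) (c : ℤ) (hc : 2 ≤ c) (hε : 0 < ε) (hm : 0 < m)
    (hM : |f| ≤ M) (hs : s ≠ b) (hW : m * (ε * |s - b|) ≤ |W|) :
    |ε ^ a * f / W ^ c| ≤ (ε ^ a * M * m ^ (-c) * ε ^ (-c)) * |s - b| ^ (-c) := by
  have hsb : 0 < |s - b| := abs_pos.2 (sub_ne_zero.2 hs)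
  have hp : 0 < m * (ε * |s - b|) := by positivity
  have hε' : 0 < ε ^ a := rpow_pos_of_pos hε a
  have hz : (m * (ε * |s - b|)) ^ c ≤ |W| ^ c := zpow_le_zpow_left₀ (by omega) hp.le hW
  have hz' : 0 < (m * (ε * |s - b|)) ^ c := zpow_pos hp _
  have hM0 : 0 ≤ M := (abs_nonneg f).trans hM
  calc |ε ^ a * f / W ^ c| = ε ^ a * |f| / |W| ^ c := by
        rw [abs_div, abs_mul, abs_zpow, abs_of_pos hε']
    _ ≤ ε ^ a * M / (m * (ε * |s - b|)) ^ c := by gcongr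
    _ = _ := by
        rw [mul_zpow, mul_zpow, zpow_neg, zpow_neg, zpow_neg]
        field_simp

lemma aux_pow (ε a M m : ℝ) (c : ℤ) (hε : 0 < ε) :
    (ε ^ a * M * m ^ (-c) * ε ^ (-c)) * (Real.sqrt ε / ε) ^ (1 - c)
      = (M * m ^ (-c)) * ε ^ (a - ((c:ℝ) + 1)/2) := by
  have e1 : Real.sqrt ε / ε = ε ^ (-(1/2) : ℝ) := by
    rw [Real.sqrt_eq_rpow]
    nth_rewrite 2 [← Real.rpow_one ε]
    rw [← Real.rpow_sub hε]; norm_num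
  rw [e1, ← Real.rpow_intCast ε, ← Real.rpow_intCast (ε ^ _), ← Real.rpow_mul hε.le]
  have : ε ^ (a - ((c:ℝ) + 1)/2) = ε ^ a * ε ^ (((-c : ℤ)) : ℝ) * ε ^ (-(1/2) * ((1 - c : ℤ) : ℝ)) := by
    rw [← Real.rpow_add hε, ← Real.rpow_add hε]
    congr 1; push_cast; ring
  rw [this]; ring

/-- Lemma 5: estimate of singular integrals outside the resonance zone. -/
theorem lem5_singular_integrals
    (DI Dτ : Set ℝ) (hDIo : IsOpen DI) (hDIc : DI.OrdConnected)
    (hDτo : IsOpen Dτ) (hDτc : Dτ.OrdConnected)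
    (ω : ℝ → ℝ) (H₁ : ℝ → ℝ → ℝ → ℝ)
    (hω : ContDiffOn ℝ 4 ω Dτ)
    (hH₁ : ContDiffOn ℝ 4 (fun p : ℝ × ℝ × ℝ => H₁ p.1 p.2.1 p.2.2)
      (DI ×ˢ (univ : Set ℝ) ×ˢ Dτ))
    (hper : ∀ x z, Function.Periodic (fun y => H₁ x y z) (2*π))
    (τs : ℝ) (hτs : τs ∈ Dτ) (hωz : ω τs = 0) (hω' : 0 < deriv ω τs)
    (hωne : ∀ τ ∈ Dτ, τ ≠ τs → ω τ ≠ 0)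
    (τm τp : ℝ) (hτm : τm ∈ Dτ) (hτp : τp ∈ Dτ)
    (h1 : τm < τs) (h2 : τs < τp) (hsym : τp - τs = τs - τm)
    (K : Set (ℝ × ℝ × ℝ)) (hK : IsCompact K)
    (hKD : K ⊆ DI ×ˢ (univ : Set ℝ) ×ˢ Dτ)
    (a : ℝ) (c : ℤ) (hc : 2 ≤ c) (f₀ : ℝ → ℝ → ℝ → ℝ)
    (hf₀ : ContinuousOn (fun p : ℝ × ℝ × ℝ => f₀ p.1 p.2.1 p.2.2)
      (DI ×ˢ (univ : Set ℝ) ×ˢ Dτ)) :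
    ∃ C > 0, ∃ ε₀ > 0, ∀ ε : ℝ, 0 < ε → ε < ε₀ →
      ∀ If φf : ℝ → ℝ,
        (∀ t ∈ Icc (τm/ε) (τp/ε),
            HasDerivAt If (-(ε * pdPhi H₁ (If t) (φf t) (ε*t))) t ∧
            HasDerivAt φf (ω (ε*t) + ε * pdI H₁ (If t) (φf t) (ε*t)) t) →
        (∀ t ∈ Icc (τm/ε) (τp/ε), (If t, φf t, ε*t) ∈ K) →
        (∀ t ∈ Icc (τm/ε) ((τs - Real.sqrt ε)/ε),
          |∫ t₁ in ((τs - Real.sqrt ε)/ε)..t,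
              ε ^ a * f₀ (If t₁) (φf t₁) (ε*t₁) / (ω (ε*t₁))^c|
            ≤ C * ε ^ (a - ((c:ℝ) + 1)/2) ∧
          |∫ t₁ in ((τs - Real.sqrt ε)/ε)..t,
              ε ^ a * f₀ (If t₁) (φf t₁) (ε*t₁) / (deriv ω τs * (ε*t₁ - τs))^c|
            ≤ C * ε ^ (a - ((c:ℝ) + 1)/2)) ∧
        (∀ t ∈ Icc ((τs + Real.sqrt ε)/ε) (τp/ε),
          |∫ t₁ in ((τs + Real.sqrt ε)/ε)..t,
              ε ^ a * f₀ (If t₁) (φf t₁) (ε*t₁) / (ω (ε*t₁))^c|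
            ≤ C * ε ^ (a - ((c:ℝ) + 1)/2) ∧
          |∫ t₁ in ((τs + Real.sqrt ε)/ε)..t,
              ε ^ a * f₀ (If t₁) (φf t₁) (ε*t₁) / (deriv ω τs * (ε*t₁ - τs))^c|
            ≤ C * ε ^ (a - ((c:ℝ) + 1)/2)) := by
  have hsub : Icc τm τp ⊆ Dτ := hDτc.out hτm hτp
  obtain ⟨M, hM⟩ := hK.exists_bound_of_continuousOn (hf₀.mono hKD)
  have hd : DifferentiableAt ℝ ω τs :=
    (hω.contDiffAt (hDτo.mem_nhds hτs)).differentiableAt (by norm_num)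
  have hdc : ContinuousOn (dslope ω τs) (Icc τm τp) :=
    ((continuousOn_dslope (Icc_mem_nhds h1 h2)).2 ⟨hω.continuousOn.mono hsub, hd⟩)
  obtain ⟨x, hx, hxm⟩ := isCompact_Icc.exists_isMinOn ⟨τs, h1.le, h2.le⟩ hdc.norm
  have hm1 : 0 < ‖dslope ω τs x‖ := by
    rw [norm_pos_iff]
    by_cases h : x = τs
    · rw [h, dslope_same]; exact hω'.ne'
    · rw [dslope_of_ne _ h, slope_def_field, hωz, sub_zero]
      exact div_ne_zero (hωne x (hsub hx) h) (sub_ne_zero.2 h)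
  have hlow : ∀ τ ∈ Icc τm τp, ‖dslope ω τs x‖ * |τ - τs| ≤ |ω τ| := by
    intro τ hτ
    have h := sub_smul_dslope ω τs τ
    rw [hωz, sub_zero, smul_eq_mul] at h
    rw [← h, abs_mul, mul_comm]
    exact mul_le_mul_of_nonneg_left (hxm hτ) (abs_nonneg _)
  obtain ⟨m, hm, hmω, hmΩ⟩ : ∃ m > 0, (∀ τ ∈ Icc τm τp, m * |τ - τs| ≤ |ω τ|) ∧
      (∀ τ ∈ Icc τm τp, m * |τ - τs| ≤ |deriv ω τs * (τ - τs)|) := by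
    refine ⟨min ‖dslope ω τs x‖ (deriv ω τs), lt_min hm1 hω', fun τ hτ => ?_, fun τ hτ => ?_⟩
    · exact (mul_le_mul_of_nonneg_right (min_le_left _ _) (abs_nonneg _)).trans (hlow τ hτ)
    · rw [abs_mul, abs_of_pos hω']
      exact mul_le_mul_of_nonneg_right (min_le_right _ _) (abs_nonneg _)
  have hM1 : (0:ℝ) < |M| + 1 := by positivity
  refine ⟨(|M| + 1) * m ^ (-c), mul_pos hM1 (zpow_pos hm _), 1, one_pos, ?_⟩
  intro ε hε _ If φf _ hmem
  have hδ : 0 < Real.sqrt ε / ε := div_pos (Real.sqrt_pos.2 hε) hε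
  have hB : 0 ≤ ε ^ a * (|M| + 1) * m ^ (-c) * ε ^ (-c) := by
    have := rpow_pos_of_pos hε a
    have := zpow_pos hm (-c)
    have := zpow_pos hε (-c)
    positivity
  have hpt : ∀ W : ℝ → ℝ, (∀ τ ∈ Icc τm τp, m * |τ - τs| ≤ |W τ|) →
      ∀ s ∈ Icc (τm/ε) (τp/ε), s ≠ τs/ε →
      |ε ^ a * f₀ (If s) (φf s) (ε*s) / (W (ε*s))^c|
        ≤ (ε ^ a * (|M| + 1) * m ^ (-c) * ε ^ (-c)) * |s - τs/ε| ^ (-c) := by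
    intro W hW s hs hsb
    refine aux_pt ε a _ m _ _ _ s c hc hε hm ?_ hsb ?_
    · have := hM _ (hmem s hs)
      rw [Real.norm_eq_abs] at this
      exact this.trans ((le_abs_self M).trans (by linarith))
    · have h := hW (ε*s) ⟨by have := (div_le_iff₀ hε).1 hs.1; linarith,
        by have := (le_div_iff₀ hε).1 hs.2; linarith⟩
      rwa [show ε * s - τs = ε * (s - τs/ε) by field_simp, abs_mul, abs_of_pos hε] at h
  have hL : ∀ W : ℝ → ℝ, (∀ τ ∈ Icc τm τp, m * |τ - τs| ≤ |W τ|) →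
      ∀ t ∈ Icc (τm/ε) ((τs - Real.sqrt ε)/ε),
      |∫ t₁ in ((τs - Real.sqrt ε)/ε)..t, ε ^ a * f₀ (If t₁) (φf t₁) (ε*t₁) / (W (ε*t₁))^c|
        ≤ (|M| + 1) * m ^ (-c) * ε ^ (a - ((c:ℝ) + 1)/2) := by
    intro W hW t ht
    rw [← aux_pow ε a _ m c hε]
    rw [sub_div] at ht ⊢
    refine aux_left _ _ t _ c hc hδ hB _ ht.2 fun s hs => hpt W hW s ⟨ht.1.trans hs.1, ?_⟩ ?_
    · have : τs/ε ≤ τp/ε := by gcongr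
      linarith [hs.2]
    · have := hs.2; intro h; linarith
  have hR : ∀ W : ℝ → ℝ, (∀ τ ∈ Icc τm τp, m * |τ - τs| ≤ |W τ|) →
      ∀ t ∈ Icc ((τs + Real.sqrt ε)/ε) (τp/ε),
      |∫ t₁ in ((τs + Real.sqrt ε)/ε)..t, ε ^ a * f₀ (If t₁) (φf t₁) (ε*t₁) / (W (ε*t₁))^c|
        ≤ (|M| + 1) * m ^ (-c) * ε ^ (a - ((c:ℝ) + 1)/2) := by
    intro W hW t ht
    rw [← aux_pow ε a _ m c hε]
    rw [add_div] at ht ⊢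
    refine aux_right _ _ t _ c hc hδ hB _ ht.1 fun s hs => hpt W hW s ⟨?_, hs.2.trans ht.2⟩ ?_
    · have : τm/ε ≤ τs/ε := by gcongr
      linarith [hs.1]
    · have := hs.1; intro h; linarith
  exact ⟨fun t ht => ⟨hL ω hmω t ht, hL (fun τ => deriv ω τs * (τ - τs)) hmΩ t ht⟩,
    fun t ht => ⟨hR ω hmω t ht, hR (fun τ => deriv ω τs * (τ - τs)) hmΩ t ht⟩⟩
end
end
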